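/- Let χ : S → ℂ be a multiplicative function (i.e. χ(xy) = χ(x)χ(y) for all x, y ∈ S) with Σ_{i∈I} c_i χ(z_i) ≠ 0 and Σ_{i∈I} c_i χ(τ(z_i)) = −Σ_{i∈I} c_i χ(z_i). Then the function f(x) := ((χ(x) − χ(τ(x)))/2) · Σ_{i∈I} c_i χ(τ(z_i)) is a non-zero solution of the integral Van Vleck equation. -/

import Mathlib

/-!
Let `L` be integration against `μ` and put `ψ = χ ∘ τ`, which is again multiplicative because the
target is commutative. The integral of a translate of `χ` or `ψ` is therefore a multiple of `L χ` or
`L ψ`, and `L ψ = -L χ` flips the relative sign of the two terms of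
`f = (χ - ψ) / 2 * L ψ`: the integral of `t ↦ f (w * t)` is `-(L χ) ^ 2 / 2 * (χ w + ψ w)`. As `τ`
interchanges `χ` and `ψ`, the Van Vleck equation then reduces to the identity
`(χ + ψ) (x * y) - (χ + ψ) (x * τ y) = (χ x - ψ x) * (χ y - ψ y)`. Moreover `L f = -(L χ) ^ 2`, so
`f` is not zero.
-/

section Definitions

variable {S ι K : Type*}

/-- Integration against the finite combination `∑ i ∈ I, c i • δ_(z i)` of Dirac measures. -/
def diracCombination [CommSemiring K] (I : Finset ι) (c : ι → K) (z : ι → S) :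
    (S → K) →ₗ[K] K where
  toFun h := ∑ i ∈ I, c i * h (z i)
  map_add' g h := by simp only [Pi.add_apply, mul_add, Finset.sum_add_distrib]
  map_smul' a h := by
    simp only [Pi.smul_apply, smul_eq_mul, mul_left_comm, Finset.mul_sum, RingHom.id_apply]

variable [Semigroup S]

/-- The integral Van Vleck equation for `f`. Integration against the measure `μ` is encoded as a
linear functional `L` on the space of all functions. -/
def IsVanVleckSolution [CommRing K] (τ : S → S) (L : (S → K) →ₗ[K] K) (f : S → K) : Prop :=
  ∀ x y, L (fun t ↦ f (x * τ y * t)) - L (fun t ↦ f (x * y * t)) = 2 * f x * f y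

/-- The candidate solution of the integral Van Vleck equation attached to two multiplicative
functions `χ` and `ψ`; it is applied with `ψ = χ ∘ τ`. -/
def vanVleckSine [Field K] (L : (S → K) →ₗ[K] K) (χ ψ : S →ₙ* K) (x : S) : K :=
  (χ x - ψ x) / 2 * L ψ

/-- The multiplicative function `χ ∘ τ`, for an antihomomorphism `τ` and a multiplicative `χ` with
commutative target. -/
def reflectedMulHom [CommSemigroup K] (τ : S → S) (hτ : ∀ x y, τ (x * y) = τ y * τ x)
    (χ : S →ₙ* K) : S →ₙ* K where
  toFun := χ ∘ τ
  map_mul' x y := by simp only [Function.comp_apply, hτ, map_mul, mul_comm]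

end Definitions

section VanVleckSine

variable {S K : Type*} [Semigroup S]

lemma functional_mulHom_mul_left [CommSemiring K] (L : (S → K) →ₗ[K] K) (χ : S →ₙ* K) (w : S) :
    L (fun t ↦ χ (w * t)) = χ w * L χ := by
  have translate_eq : (fun t ↦ χ (w * t)) = χ w • ⇑χ := funext (map_mul χ w)
  rw [translate_eq, map_smul, smul_eq_mul]

variable [Field K] {L : (S → K) →ₗ[K] K} {χ ψ : S →ₙ* K}

lemma vanVleckSine_eq_smul : vanVleckSine L χ ψ = (L ψ / 2) • (⇑χ - ⇑ψ) := by
  ext x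
  simp only [vanVleckSine, Pi.smul_apply, Pi.sub_apply, smul_eq_mul]
  ring

lemma functional_vanVleckSine_mul_left (hψ : L ψ = -L χ) (w : S) :
    L (fun t ↦ vanVleckSine L χ ψ (w * t)) = -(L χ) ^ 2 / 2 * (χ w + ψ w) := by
  have translate_eq : (fun t ↦ vanVleckSine L χ ψ (w * t)) =
      (L ψ / 2) • ((fun t ↦ χ (w * t)) - fun t ↦ ψ (w * t)) := by
    rw [vanVleckSine_eq_smul]
    rfl
  rw [translate_eq, map_smul, map_sub, functional_mulHom_mul_left, functional_mulHom_mul_left,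
    smul_eq_mul, hψ]
  ring

variable [NeZero (2 : K)]

lemma functional_vanVleckSine (hψ : L ψ = -L χ) : L (vanVleckSine L χ ψ) = -(L χ) ^ 2 := by
  rw [vanVleckSine_eq_smul, map_smul, map_sub, smul_eq_mul, hψ]
  field [NeZero.ne (2 : K)]

lemma vanVleckSine_ne_zero (hχ : L χ ≠ 0) (hψ : L ψ = -L χ) : vanVleckSine L χ ψ ≠ 0 := by
  intro sine_eq_zero
  apply neg_ne_zero.mpr (pow_ne_zero 2 hχ)
  rw [← functional_vanVleckSine hψ, sine_eq_zero, map_zero]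

lemma isVanVleckSolution_vanVleckSine {τ : S → S} (hχτ : ∀ x, χ (τ x) = ψ x)
    (hψτ : ∀ x, ψ (τ x) = χ x) (hψ : L ψ = -L χ) :
    IsVanVleckSolution τ L (vanVleckSine L χ ψ) := by
  intro x y
  rw [functional_vanVleckSine_mul_left hψ, functional_vanVleckSine_mul_left hψ]
  simp only [vanVleckSine, map_mul, hχτ, hψτ, hψ]
  field [NeZero.ne (2 : K)]

end VanVleckSine

theorem stmt_10_general {S K : Type*} [Semigroup S] [Field K] [NeZero (2 : K)] {τ : S → S}
    (hτmul : ∀ x y, τ (x * y) = τ y * τ x) (hτinv : Function.Involutive τ)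
    (L : (S → K) →ₗ[K] K) (χ : S →ₙ* K) (hχ : L χ ≠ 0) (hχτ : L (χ ∘ τ) = -L χ)
    {f : S → K} (hf : ∀ x, f x = (χ x - χ (τ x)) / 2 * L (χ ∘ τ)) :
    f ≠ 0 ∧ IsVanVleckSolution τ L f := by
  obtain rfl : f = vanVleckSine L χ (reflectedMulHom τ hτmul χ) := funext hf
  exact ⟨vanVleckSine_ne_zero hχ hχτ,
    isVanVleckSolution_vanVleckSine (fun _ ↦ rfl) (fun x ↦ congrArg χ (hτinv x)) hχτ⟩

theorem stmt_10 {S ι : Type*} [Semigroup S] (τ : S → S)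
    (hτmul : ∀ x y : S, τ (x * y) = τ y * τ x)
    (hτinv : ∀ x : S, τ (τ x) = x)
    (I : Finset ι) (c : ι → ℂ) (z : ι → S)
    (hz : ∀ i ∈ I, ∀ s : S, z i * s = s * z i)
    (χ : S → ℂ) (hχ : ∀ x y : S, χ (x * y) = χ x * χ y)
    (hχ1 : (∑ i ∈ I, c i * χ (z i)) ≠ 0)
    (hχ2 : (∑ i ∈ I, c i * χ (τ (z i))) = -(∑ i ∈ I, c i * χ (z i)))
    (f : S → ℂ)
    (hf : ∀ x : S, f x = ((χ x - χ (τ x)) / 2) * ∑ i ∈ I, c i * χ (τ (z i))) :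
    f ≠ 0 ∧ ∀ x y : S,
      (∑ i ∈ I, c i * f (x * τ y * z i)) - (∑ i ∈ I, c i * f (x * y * z i))
        = 2 * f x * f y :=
  stmt_10_general hτmul hτinv (diracCombination I c z) ⟨χ, hχ⟩ hχ1 hχ2 hf
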